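/- Let C be an abelian category with enough projective objects and let D be an abelian category in which all countable direct limits exist and are exact. Then every cohomological functor (T^•, δ^•) : C → D admits a Mislin completion, and a Mislin completion can be defined via the satellite functor construction T̂^n(M) := colim_{k ∈ ℕ₀} (S^{-k}T^{n+k}(M), S^{-k}δ̲^{n+k}). -/

import Mathlib

open CategoryTheory Category Limits

universe v u v' u'

namespace Mislin

variable (C : Type u) [Category.{v} C] [Abelian C]
variable (D : Type u') [Category.{v'} D] [Abelian D]

/-- A cohomological functor `(T^•, δ^•) : C ⥤ D` (Axioms 2.1–2.2 of the paper):
a family of additive functors together with connecting homomorphisms, natural with respect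
to morphisms of short exact sequences, inducing long exact sequences. -/
structure CohomFunctor where
  T : ℤ → C ⥤ D
  additive : ∀ n, (T n).Additive
  δ : ∀ {X : ShortComplex C}, X.ShortExact → ∀ n : ℤ, (T n).obj X.X₃ ⟶ (T (n + 1)).obj X.X₁
  δ_natural : ∀ {X Y : ShortComplex C} (hX : X.ShortExact) (hY : Y.ShortExact)
    (φ : X ⟶ Y) (n : ℤ),
    (T n).map φ.τ₃ ≫ δ hY n = δ hX n ≫ (T (n + 1)).map φ.τ₁
  zero₁ : ∀ {X : ShortComplex C}, X.ShortExact → ∀ n : ℤ,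
    (T n).map X.f ≫ (T n).map X.g = 0
  zero₂ : ∀ {X : ShortComplex C} (hX : X.ShortExact) (n : ℤ),
    (T n).map X.g ≫ δ hX n = 0
  zero₃ : ∀ {X : ShortComplex C} (hX : X.ShortExact) (n : ℤ),
    δ hX n ≫ (T (n + 1)).map X.f = 0
  exact₁ : ∀ {X : ShortComplex C} (hX : X.ShortExact) (n : ℤ),
    (ShortComplex.mk ((T n).map X.f) ((T n).map X.g) (zero₁ hX n)).Exact
  exact₂ : ∀ {X : ShortComplex C} (hX : X.ShortExact) (n : ℤ),
    (ShortComplex.mk ((T n).map X.g) (δ hX n) (zero₂ hX n)).Exact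
  exact₃ : ∀ {X : ShortComplex C} (hX : X.ShortExact) (n : ℤ),
    (ShortComplex.mk (δ hX n) ((T (n + 1)).map X.f) (zero₃ hX n)).Exact

variable {C D}

/-- A morphism of cohomological functors (Axiom 2.3). -/
structure CohomHom (T U : CohomFunctor C D) where
  app : ∀ n : ℤ, T.T n ⟶ U.T n
  comm : ∀ {X : ShortComplex C} (hX : X.ShortExact) (n : ℤ),
    (app n).app X.X₃ ≫ U.δ hX n = T.δ hX n ≫ (app (n + 1)).app X.X₁

/-- Composition of morphisms of cohomological functors. -/
def CohomHom.comp {T U V : CohomFunctor C D} (f : CohomHom T U) (g : CohomHom U V) :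
    CohomHom T V where
  app n := f.app n ≫ g.app n
  comm hX n := by
    simp only [NatTrans.comp_app, Category.assoc]
    rw [g.comm hX n, ← Category.assoc, f.comm hX n, Category.assoc]

/-- A cohomological functor vanishes on projectives if `T^n(P) = 0` for all projective `P`
and all `n ∈ ℤ`. -/
def VanishesOnProjectives (T : CohomFunctor C D) : Prop :=
  ∀ (n : ℤ) (P : C), Projective P → IsZero ((T.T n).obj P)

/-- `(T̂^•, δ̂^•)` together with `ν : T^• → T̂^•` is a Mislin completion of `(T^•, δ^•)`
(Definition 2.4): it vanishes on projectives and every morphism to a cohomological functor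
vanishing on projectives factors uniquely through `ν`. -/
structure IsMislinCompletion (T That : CohomFunctor C D) (ν : CohomHom T That) : Prop where
  vanishes : VanishesOnProjectives That
  factors : ∀ (U : CohomFunctor C D), VanishesOnProjectives U → ∀ φ : CohomHom T U,
    ∃! ψ : CohomHom That U, ν.comp ψ = φ

/-- The elementary universal property for a colimit (direct limit) of an `ℕ`-indexed
direct system in `D`. -/
structure IsDirectLimit {X : ℕ → D} (f : ∀ k, X k ⟶ X (k + 1)) (L : D)
    (ι : ∀ k, X k ⟶ L) : Prop where
  comm : ∀ k, f k ≫ ι (k + 1) = ι k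
  desc : ∀ (Z : D) (g : ∀ k, X k ⟶ Z), (∀ k, f k ≫ g (k + 1) = g k) →
    ∃! u : L ⟶ Z, ∀ k, ι k ≫ u = g k

/-- An abstract system of left satellite functors `S^{-k}T^n` of a cohomological functor `T`,
in the sense of Cartan–Eilenberg, together with the connecting homomorphisms `ε`, the
factorisation `δ̲` of `δ` through the first left satellite, and its satellites `S^{-k}δ̲`.
Here `S k n` plays the role of `S^{-k}T^n`. -/
structure SatelliteSystem (T : CohomFunctor C D) where
  S : ℕ → ℤ → C ⥤ D
  additive : ∀ k n, (S k n).Additive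
  S_zero : ∀ n, S 0 n = T.T n
  /-- connecting homomorphisms of satellite functors, `ε^{-k-1} : S^{-k-1}T^n(X₃) ⟶ S^{-k}T^n(X₁)`. -/
  ε : ∀ {X : ShortComplex C}, X.ShortExact → ∀ (k : ℕ) (n : ℤ),
    (S (k + 1) n).obj X.X₃ ⟶ (S k n).obj X.X₁
  ε_natural : ∀ {X Y : ShortComplex C} (hX : X.ShortExact) (hY : Y.ShortExact)
    (φ : X ⟶ Y) (k : ℕ) (n : ℤ),
    (S (k + 1) n).map φ.τ₃ ≫ ε hY k n = ε hX k n ≫ (S k n).map φ.τ₁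
  /-- higher left satellite functors vanish on projective objects. -/
  vanish : ∀ (k : ℕ) (n : ℤ) (P : C), Projective P → IsZero ((S (k + 1) n).obj P)
  sz₁ : ∀ {X : ShortComplex C}, X.ShortExact → ∀ (k : ℕ) (n : ℤ),
    (S k n).map X.f ≫ (S k n).map X.g = 0
  sz₂ : ∀ {X : ShortComplex C} (hX : X.ShortExact) (k : ℕ) (n : ℤ),
    (S (k + 1) n).map X.g ≫ ε hX k n = 0
  sz₃ : ∀ {X : ShortComplex C} (hX : X.ShortExact) (k : ℕ) (n : ℤ),
    ε hX k n ≫ (S k n).map X.f = 0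
  sexact₁ : ∀ {X : ShortComplex C} (hX : X.ShortExact) (k : ℕ) (n : ℤ),
    (ShortComplex.mk ((S k n).map X.f) ((S k n).map X.g) (sz₁ hX k n)).Exact
  sexact₂ : ∀ {X : ShortComplex C} (hX : X.ShortExact) (k : ℕ) (n : ℤ),
    (ShortComplex.mk ((S (k + 1) n).map X.g) (ε hX k n) (sz₂ hX k n)).Exact
  sexact₃ : ∀ {X : ShortComplex C} (hX : X.ShortExact) (k : ℕ) (n : ℤ),
    (ShortComplex.mk (ε hX k n) ((S k n).map X.f) (sz₃ hX k n)).Exact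
  /-- the natural transformations `S^{-k}δ̲^n : S^{-k}T^n → S^{-k-1}T^{n+1}`. -/
  Sδbar : ∀ (k : ℕ) (n : ℤ), S k n ⟶ S (k + 1) (n + 1)
  /-- `δ^n` factors as `δ̲^n` followed by `ε^{-1}` (Diagram 3.4 of the paper). -/
  δ_fac : ∀ {X : ShortComplex C} (hX : X.ShortExact) (n : ℤ),
    T.δ hX n =
      eqToHom (congrArg (fun F : C ⥤ D => F.obj X.X₃) (S_zero n).symm) ≫
        (Sδbar 0 n).app X.X₃ ≫ ε hX 0 (n + 1) ≫
          eqToHom (congrArg (fun F : C ⥤ D => F.obj X.X₁) (S_zero (n + 1)))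
  /-- the defining compatibility of `S^{-k-1}δ̲` with `S^{-k}δ̲` over the kernel
  monomorphisms `ε`, for short exact sequences with projective middle term. -/
  Sδbar_proj : ∀ {X : ShortComplex C} (hX : X.ShortExact), Projective X.X₂ →
    ∀ (k : ℕ) (n : ℤ),
    (Sδbar (k + 1) n).app X.X₃ ≫ ε hX (k + 1) (n + 1) =
      ε hX k n ≫ (Sδbar k n).app X.X₁

theorem cast_step (n : ℤ) (k : ℕ) : n + (k : ℤ) + 1 = n + ((k + 1 : ℕ) : ℤ) := by
  push_cast; ring

/-- The `k`-th term `S^{-k}T^{n+k}(M)` of the direct system of the satellite functor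
construction. -/
def SatelliteSystem.obj {T : CohomFunctor C D} (SS : SatelliteSystem T) (n : ℤ) (M : C)
    (k : ℕ) : D :=
  (SS.S k (n + (k : ℤ))).obj M

/-- The transition morphism `S^{-k}δ̲^{n+k} : S^{-k}T^{n+k}(M) ⟶ S^{-k-1}T^{n+k+1}(M)` of the
direct system of the satellite functor construction. -/
def SatelliteSystem.map {T : CohomFunctor C D} (SS : SatelliteSystem T) (n : ℤ) (M : C)
    (k : ℕ) : SS.obj n M k ⟶ SS.obj n M (k + 1) :=
  (SS.Sδbar k (n + (k : ℤ))).app M ≫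
    eqToHom (congrArg (fun m : ℤ => (SS.S (k + 1) m).obj M) (cast_step n k))

theorem obj_zero_eq {T : CohomFunctor C D} (SS : SatelliteSystem T) (n : ℤ) (M : C) :
    (T.T n).obj M = SS.obj n M 0 := by
  show (T.T n).obj M = (SS.S 0 (n + ((0 : ℕ) : ℤ))).obj M
  rw [SS.S_zero]
  norm_num

/-!
A connecting homomorphism `F(X₃) ⟶ G(X₁)` exhibits `F` as the left satellite of `G` when it
identifies `F(M)` with the kernel of `G(K) ⟶ G(P)` for `0 → K → P → M → 0` with `P` projective. It
is then universal among connecting homomorphisms with target `G`, and this universal property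
produces every map needed. It yields `δ̲^n` and its satellites `S^{-k}δ̲^n`. If `U^•` vanishes on
projectives, its long exact sequences say that `δ^n` exhibits `U^n` as the left satellite of
`U^{n+1}`; hence a morphism `T^• → U^•` extends, uniquely and one satellite at a time, to maps
`S^{-k}T^{n+k} → U^n`, which are compatible in `k` and so define `T̂^n → U^n`.

If `G` is half exact then so is its left satellite, and the two fit into a long exact sequence: for
a short exact sequence `X` and a presentation `0 → K → P → X₃ → 0`, compare with the short exact
sequence `0 → K → P ⊞ X₁ → X₂ → 0`. Exactness of countable direct limits carries these sequences
over to `T̂^•`, and `T̂^•` vanishes on projectives because `S^{-k}T^{n+k}` does for `k ≥ 1`.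
-/

section ProjectivePresentations

lemma exists_hom_τ₃_eq {X Y : ShortComplex C} [Projective X.X₂] (hY : Y.ShortExact)
    (f : X.X₃ ⟶ Y.X₃) : ∃ φ : X ⟶ Y, φ.τ₃ = f := by
  have := hY.mono_f
  have := hY.epi_g
  have hz : (X.f ≫ Projective.factorThru (X.g ≫ f) Y.g) ≫ Y.g = 0 := by
    rw [assoc, Projective.factorThru_comp, X.zero_assoc, zero_comp]
  exact ⟨{
    τ₁ := hY.exact.lift _ hz
    τ₂ := Projective.factorThru (X.g ≫ f) Y.g
    τ₃ := f
    comm₁₂ := by simp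
    comm₂₃ := by simp }, rfl⟩

lemma exists_τ₁_eq_add_f_comp {X Y : ShortComplex C} (hY : Y.ShortExact) {φ ψ : X ⟶ Y}
    (h : φ.τ₃ = ψ.τ₃) : ∃ s : X.X₂ ⟶ Y.X₁, φ.τ₁ = ψ.τ₁ + X.f ≫ s := by
  have := hY.mono_f
  have hz : (φ.τ₂ - ψ.τ₂) ≫ Y.g = 0 := by
    rw [Preadditive.sub_comp, φ.comm₂₃, ψ.comm₂₃, h, sub_self]
  refine ⟨hY.exact.lift _ hz, ?_⟩
  rw [← cancel_mono Y.f]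
  simp only [Preadditive.add_comp, assoc, ShortComplex.Exact.lift_f, Preadditive.comp_sub,
    φ.comm₁₂, ψ.comm₁₂, add_sub_cancel]

lemma comp_map_τ₁_eq (F : C ⥤ D) [F.Additive] {X Y : ShortComplex C} (hY : Y.ShortExact)
    {φ ψ : X ⟶ Y} (h : φ.τ₃ = ψ.τ₃) {A : D} {a : A ⟶ F.obj X.X₁} (ha : a ≫ F.map X.f = 0) :
    a ≫ F.map φ.τ₁ = a ≫ F.map ψ.τ₁ := by
  obtain ⟨s, hs⟩ := exists_τ₁_eq_add_f_comp hY h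
  rw [hs, F.map_add, F.map_comp, Preadditive.comp_add, reassoc_of% ha, zero_comp, add_zero]

variable [EnoughProjectives C]

/-- The short exact sequence `0 → K → P → M → 0` given by the chosen epimorphism
`Projective.π M` from a projective object. -/
noncomputable abbrev presentation (M : C) : ShortComplex C :=
  ShortComplex.mk (kernel.ι (Projective.π M)) (Projective.π M) (kernel.condition _)

lemma presentation_shortExact (M : C) : (presentation M).ShortExact where
  exact := ShortComplex.exact_kernel _

/-- A chosen lift of a morphism `M ⟶ Y.X₃` to a morphism from the presentation of `M` to `Y`. -/
noncomputable def presentationLift {M : C} {Y : ShortComplex C} (hY : Y.ShortExact)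
    (f : M ⟶ Y.X₃) : presentation M ⟶ Y :=
  (exists_hom_τ₃_eq (X := presentation M) hY f).choose

@[simp]
lemma presentationLift_τ₃ {M : C} {Y : ShortComplex C} (hY : Y.ShortExact) (f : M ⟶ Y.X₃) :
    (presentationLift hY f).τ₃ = f :=
  (exists_hom_τ₃_eq (X := presentation M) hY f).choose_spec

end ProjectivePresentations

section ConnectingHom

/-- A connecting homomorphism from `F` to `G`: morphisms `F(X₃) ⟶ G(X₁)`, natural in the short
exact sequence `0 → X₁ → X₂ → X₃ → 0`, whose composite with `G(X₁) ⟶ G(X₂)` vanishes. Both the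
`δ^n` of a cohomological functor and the `ε` of a satellite system are of this kind. -/
@[ext]
structure ConnectingHom (F G : C ⥤ D) where
  app : ∀ {X : ShortComplex C}, X.ShortExact → (F.obj X.X₃ ⟶ G.obj X.X₁)
  naturality : ∀ {X Y : ShortComplex C} (hX : X.ShortExact) (hY : Y.ShortExact) (φ : X ⟶ Y),
    F.map φ.τ₃ ≫ app hY = app hX ≫ G.map φ.τ₁
  app_comp_map_f : ∀ {X : ShortComplex C} (hX : X.ShortExact), app hX ≫ G.map X.f = 0

namespace ConnectingHom

variable {F F' F'' G G' G'' : C ⥤ D}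

/-- The composite of a natural transformation followed by a connecting homomorphism. -/
@[simps]
def precomp (ε : ConnectingHom F G) (α : F' ⟶ F) : ConnectingHom F' G where
  app hX := α.app _ ≫ ε.app hX
  naturality hX hY φ := by
    rw [assoc, ← ε.naturality hX hY φ, α.naturality_assoc]
  app_comp_map_f hX := by
    rw [assoc, ε.app_comp_map_f, comp_zero]

/-- The composite of a connecting homomorphism followed by a natural transformation. -/
@[simps]
def postcomp (ε : ConnectingHom F G) (β : G ⟶ G') : ConnectingHom F G' where
  app hX := ε.app hX ≫ β.app _
  naturality hX hY φ := by
    rw [reassoc_of% ε.naturality hX hY φ, assoc, β.naturality]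
  app_comp_map_f hX := by
    rw [assoc, ← β.naturality, reassoc_of% ε.app_comp_map_f hX, zero_comp]

lemma precomp_precomp (ε : ConnectingHom F G) (α : F' ⟶ F) (α' : F'' ⟶ F') :
    (ε.precomp α).precomp α' = ε.precomp (α' ≫ α) := by
  simp only [precomp, NatTrans.comp_app, assoc]

lemma postcomp_postcomp (ε : ConnectingHom F G) (β : G ⟶ G') (β' : G' ⟶ G'') :
    (ε.postcomp β).postcomp β' = ε.postcomp (β ≫ β') := by
  simp only [postcomp, NatTrans.comp_app, assoc]

lemma postcomp_precomp (ε : ConnectingHom F G) (α : F' ⟶ F) (β : G ⟶ G') :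
    (ε.postcomp β).precomp α = (ε.precomp α).postcomp β := by
  simp only [precomp, postcomp, assoc]

lemma congr_app {ε ε' : ConnectingHom F G} (h : ε = ε') {X : ShortComplex C}
    (hX : X.ShortExact) : ε.app hX = ε'.app hX := by
  rw [h]

/-- Pulling `X` back along `X.g` gives a split short exact sequence, on which `ε` vanishes. -/
lemma map_g_comp_app (ε : ConnectingHom F G) {X : ShortComplex C} (hX : X.ShortExact) :
    F.map X.g ≫ ε.app hX = 0 := by
  let split : ShortComplex C :=
    .mk (biprod.inl : X.X₁ ⟶ X.X₁ ⊞ X.X₂) biprod.snd biprod.inl_snd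
  have h_split : split.ShortExact := (ShortComplex.Splitting.ofHasBinaryBiproduct _ _).shortExact
  let φ : split ⟶ X :=
    { τ₁ := 𝟙 _
      τ₂ := biprod.desc X.f (𝟙 _)
      τ₃ := X.g
      comm₁₂ := by simp [split]
      comm₂₃ := by ext <;> simp [split] }
  have h_zero : ε.app h_split = 0 := by
    have : Mono (G.map split.f) := inferInstanceAs (Mono (G.map biprod.inl))
    rw [← cancel_mono (G.map split.f), ε.app_comp_map_f, zero_comp]
  rw [ε.naturality h_split hX φ, h_zero, zero_comp]

section

variable [EnoughProjectives C]

lemma app_eq_presentation_app (ε : ConnectingHom F G) {X : ShortComplex C} (hX : X.ShortExact) :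
    ε.app hX = ε.app (presentation_shortExact X.X₃) ≫ G.map (presentationLift hX (𝟙 _)).τ₁ := by
  rw [← ε.naturality (presentation_shortExact X.X₃) hX, presentationLift_τ₃, F.map_id, id_comp]

lemma ext_presentation {ε ε' : ConnectingHom F G}
    (h : ∀ M, ε.app (presentation_shortExact M) = ε'.app (presentation_shortExact M)) :
    ε = ε' := by
  ext X hX
  rw [ε.app_eq_presentation_app, ε'.app_eq_presentation_app, h]

end

/-- Exactness at `F(X₃)` and at `G(X₁)` of
`F(X₂) ⟶ F(X₃) ⟶ G(X₁) ⟶ G(X₂)`, for every short exact sequence `X`. -/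
structure IsExact (ε : ConnectingHom F G) : Prop where
  exact_app : ∀ {X : ShortComplex C} (hX : X.ShortExact),
    (ShortComplex.mk (F.map X.g) (ε.app hX) (ε.map_g_comp_app hX)).Exact
  app_exact : ∀ {X : ShortComplex C} (hX : X.ShortExact),
    (ShortComplex.mk (ε.app hX) (G.map X.f) (ε.app_comp_map_f hX)).Exact

/-- `ε : ConnectingHom F G` exhibits `F` as the left satellite `S^{-1}G`: for every short exact
sequence `0 → K → P → M → 0` with `P` projective, `ε` identifies `F(M)` with the kernel of
`G(K) ⟶ G(P)`. -/
structure IsLeftSatellite (ε : ConnectingHom F G) : Prop where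
  mono_app : ∀ {X : ShortComplex C} (hX : X.ShortExact) [Projective X.X₂], Mono (ε.app hX)
  app_exact : ∀ {X : ShortComplex C} (hX : X.ShortExact) [Projective X.X₂],
    (ShortComplex.mk (ε.app hX) (G.map X.f) (ε.app_comp_map_f hX)).Exact

lemma IsExact.isLeftSatellite {ε : ConnectingHom F G} (hε : ε.IsExact)
    (hF : ∀ P, Projective P → IsZero (F.obj P)) : ε.IsLeftSatellite where
  mono_app {X} hX _ := (hε.exact_app hX).mono_g ((hF X.X₂ ‹_›).eq_of_src _ _)
  app_exact hX _ := hε.app_exact hX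

lemma IsExact.postcomp {ε : ConnectingHom F G} (hε : ε.IsExact) (β : G ⟶ G') [IsIso β] :
    (ε.postcomp β).IsExact where
  exact_app {X} hX := by
    refine ShortComplex.exact_of_iso ?_ (hε.exact_app hX)
    exact ShortComplex.isoMk (Iso.refl _) (Iso.refl _) (asIso (β.app X.X₁))
      (by simp) (by simp [ConnectingHom.postcomp])
  app_exact {X} hX := by
    refine ShortComplex.exact_of_iso ?_ (hε.app_exact hX)
    exact ShortComplex.isoMk (Iso.refl _) (asIso (β.app X.X₁)) (asIso (β.app X.X₂))
      (by simp [ConnectingHom.postcomp]) (by simp)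

namespace IsLeftSatellite

variable {ε : ConnectingHom F G}

open ZeroObject in
lemma isZero_obj_of_projective (hε : ε.IsLeftSatellite) [G.Additive] (P : C) [Projective P] :
    IsZero (F.obj P) := by
  let X : ShortComplex C := .mk (0 : 0 ⟶ P) (𝟙 P) zero_comp
  have hX : X.ShortExact :=
    (ShortComplex.Splitting.ofIsZeroOfIsIso X (isZero_zero C) (IsIso.id P)).shortExact
  have : Projective X.X₂ := ‹Projective P›
  have := hε.mono_app hX
  exact IsZero.of_mono (ε.app hX) (G.map_isZero (isZero_zero C))

variable [EnoughProjectives C]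

lemma hom_ext (hε : ε.IsLeftSatellite) {α β : F' ⟶ F} (h : ε.precomp α = ε.precomp β) : α = β := by
  ext M
  have := hε.mono_app (presentation_shortExact M)
  exact (cancel_mono _).1 (congr_app h (presentation_shortExact M))

lemma additive (hε : ε.IsLeftSatellite) [G.Additive] : F.Additive where
  map_add {M N f g} := by
    have hN := presentation_shortExact N
    have := hε.mono_app hN
    have h_map (φ : presentation M ⟶ presentation N) :
        F.map φ.τ₃ ≫ ε.app hN = ε.app (presentation_shortExact M) ≫ G.map φ.τ₁ :=
      ε.naturality _ _ φ
    have h_add := h_map (presentationLift hN f + presentationLift hN g)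
    have h_f := h_map (presentationLift hN f)
    have h_g := h_map (presentationLift hN g)
    simp only [ShortComplex.add_τ₃, ShortComplex.add_τ₁, presentationLift_τ₃, G.map_add,
      Preadditive.comp_add] at h_add h_f h_g
    rw [← cancel_mono (ε.app hN), h_add, Preadditive.add_comp, h_f, h_g]

/-- The universal property of the left satellite: a connecting homomorphism to `G` factors
through `ε` by a natural transformation, which is unique by `hom_ext`. -/
noncomputable def lift (hε : ε.IsLeftSatellite) (ε' : ConnectingHom F' G) : F' ⟶ F where
  app M :=
    have := hε.mono_app (presentation_shortExact M)
    (hε.app_exact (presentation_shortExact M)).lift (ε'.app (presentation_shortExact M))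
      (ε'.app_comp_map_f _)
  naturality M N f := by
    have hN := presentation_shortExact N
    have := hε.mono_app (presentation_shortExact M)
    have := hε.mono_app hN
    have h_ε := ε.naturality (presentation_shortExact M) hN (presentationLift hN f)
    have h_ε' := ε'.naturality (presentation_shortExact M) hN (presentationLift hN f)
    rw [presentationLift_τ₃] at h_ε h_ε'
    rw [← cancel_mono (ε.app hN), assoc, assoc, h_ε, ShortComplex.Exact.lift_f,
      ShortComplex.Exact.lift_f_assoc, h_ε']

lemma precomp_lift (hε : ε.IsLeftSatellite) (ε' : ConnectingHom F' G) :
    ε.precomp (hε.lift ε') = ε' := by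
  refine ext_presentation fun M => ?_
  have := hε.mono_app (presentation_shortExact M)
  exact (hε.app_exact (presentation_shortExact M)).lift_f _ _

end IsLeftSatellite

end ConnectingHom

end ConnectingHom

section Rotation

/-- The sequence `0 → Z₁ → Z₂ ⊞ X₁ → X₂ → 0` attached to a morphism `φ : Z ⟶ X` of short complexes.
If `Z` and `X` are short exact and `φ.τ₃` is invertible, then the square formed by `φ.τ₁` and
`φ.τ₂` is bicartesian and this sequence is short exact. -/
noncomputable abbrev rotation {Z X : ShortComplex C} (φ : Z ⟶ X) : ShortComplex C :=
  ShortComplex.mk (biprod.lift Z.f φ.τ₁) (biprod.desc φ.τ₂ (-X.f)) (by simp [φ.comm₁₂])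

lemma isPullback_of_mono_τ₃ {Z X : ShortComplex C} (hZ : Z.ShortExact) (hX : X.ShortExact)
    (φ : Z ⟶ X) [Mono φ.τ₃] : IsPullback Z.f φ.τ₁ φ.τ₂ X.f := by
  have := hZ.mono_f
  have := hX.mono_f
  have h_zero (s : PullbackCone φ.τ₂ X.f) : s.fst ≫ Z.g = 0 := by
    rw [← cancel_mono φ.τ₃, assoc, ← φ.comm₂₃, s.condition_assoc, X.zero, comp_zero, zero_comp]
  have h_lift (s : PullbackCone φ.τ₂ X.f) : hZ.exact.lift s.fst (h_zero s) ≫ Z.f = s.fst :=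
    hZ.exact.lift_f _ _
  refine ⟨⟨φ.comm₁₂.symm⟩, ⟨PullbackCone.IsLimit.mk _
    (fun s => hZ.exact.lift s.fst (h_zero s)) h_lift (fun s => ?_) (fun s m h _ => ?_)⟩⟩
  · rw [← cancel_mono X.f, assoc, φ.comm₁₂, reassoc_of% h_lift s, s.condition]
  · rw [← cancel_mono Z.f, h, h_lift]

lemma epi_rotation_g {Z X : ShortComplex C} [Epi Z.g] (hX : X.ShortExact) (φ : Z ⟶ X)
    [Epi φ.τ₃] : Epi (rotation φ).g := by
  have := hX.epi_g
  refine Preadditive.epi_of_cancel_zero _ fun t ht => ?_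
  have ht₁ : φ.τ₂ ≫ t = 0 := by simpa using biprod.inl ≫= ht
  have ht₂ : X.f ≫ t = 0 := by simpa using biprod.inr ≫= ht
  have h_desc : hX.exact.desc t ht₂ = 0 := by
    rw [← cancel_epi φ.τ₃, ← cancel_epi Z.g, ← φ.comm₂₃_assoc, hX.exact.g_desc, ht₁, comp_zero,
      comp_zero]
  rw [← hX.exact.g_desc t ht₂, h_desc, comp_zero]

lemma rotation_shortExact {Z X : ShortComplex C} (hZ : Z.ShortExact) (hX : X.ShortExact)
    (φ : Z ⟶ X) [IsIso φ.τ₃] : (rotation φ).ShortExact :=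
  have := hZ.epi_g
  { exact := (isPullback_of_mono_τ₃ hZ hX φ).exact_shortComplex'
    mono_f := (isPullback_of_mono_τ₃ hZ hX φ).mono_shortComplex'_f
    epi_g := epi_rotation_g hX φ }

/-- The morphism from the rotation of `φ : Z ⟶ X` back to `Z`. -/
@[simps]
noncomputable def rotationHom {Z X : ShortComplex C} (φ : Z ⟶ X) [IsIso φ.τ₃] :
    rotation φ ⟶ Z where
  τ₁ := 𝟙 _
  τ₂ := biprod.fst
  τ₃ := X.g ≫ inv φ.τ₃
  comm₁₂ := by simp
  comm₂₃ := by apply biprod.hom_ext' <;> simp [φ.comm₂₃_assoc]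

end Rotation

section LongExactSequence

/-- An additive functor that is exact in the middle on short exact sequences. -/
class IsHalfExact (F : C ⥤ D) : Prop extends F.Additive where
  exact {X : ShortComplex C} (hX : X.ShortExact) :
    (ShortComplex.mk (F.map X.f) (F.map X.g) (by rw [← F.map_comp, X.zero, F.map_zero])).Exact

lemma IsHalfExact.exists_comp_map_τ₁_eq (G : C ⥤ D) [IsHalfExact G] {Z X : ShortComplex C}
    (hZ : Z.ShortExact) (hX : X.ShortExact) (φ : Z ⟶ X) [IsIso φ.τ₃] {A : D}
    (x : A ⟶ G.obj X.X₁) (hx : x ≫ G.map X.f = 0) :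
    ∃ (A' : D) (π : A' ⟶ A) (_ : Epi π) (y : A' ⟶ G.obj Z.X₁),
      y ≫ G.map Z.f = 0 ∧ π ≫ x = y ≫ G.map φ.τ₁ := by
  have hx' : (x ≫ G.map biprod.inr) ≫ G.map (biprod.desc φ.τ₂ (-X.f)) = 0 := by
    rw [assoc, ← G.map_comp, biprod.inr_desc, G.map_neg, Preadditive.comp_neg, hx, neg_zero]
  obtain ⟨A', π, hπ, y, hy⟩ :=
    (IsHalfExact.exact (F := G) (rotation_shortExact hZ hX φ)).exact_up_to_refinements _ hx'
  replace hy : π ≫ x ≫ G.map biprod.inr = y ≫ G.map (biprod.lift Z.f φ.τ₁) := hy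
  refine ⟨A', π, hπ, y, ?_, ?_⟩
  · simpa [← G.map_comp] using (hy =≫ G.map biprod.fst).symm
  · simpa [← G.map_comp] using hy =≫ G.map biprod.snd

variable [EnoughProjectives C] {F G : C ⥤ D}

instance {X : ShortComplex C} (hX : X.ShortExact) : IsIso (presentationLift hX (𝟙 _)).τ₃ := by
  rw [presentationLift_τ₃]
  infer_instance

/-- The rotation of the chosen lift `presentation X.X₃ ⟶ X` of the identity, that is
`0 → K → P ⊞ X₁ → X₂ → 0` where `0 → K → P → X₃ → 0` is the presentation of `X₃`. -/
noncomputable abbrev presentationRotation {X : ShortComplex C} (hX : X.ShortExact) :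
    ShortComplex C :=
  rotation (presentationLift hX (𝟙 _))

lemma presentationRotation_shortExact {X : ShortComplex C} (hX : X.ShortExact) :
    (presentationRotation hX).ShortExact :=
  rotation_shortExact (presentation_shortExact _) hX _

namespace ConnectingHom

lemma app_presentationRotation (ε : ConnectingHom F G) {X : ShortComplex C} (hX : X.ShortExact) :
    ε.app (presentationRotation_shortExact hX) =
      F.map X.g ≫ ε.app (X := presentation X.X₃) (presentation_shortExact X.X₃) := by
  have h := ε.naturality (presentationRotation_shortExact hX) (presentation_shortExact X.X₃)
    (rotationHom (presentationLift hX (𝟙 _)))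
  simpa using h.symm

namespace IsLeftSatellite

variable {ε : ConnectingHom F G}

lemma exact_at_target (hε : ε.IsLeftSatellite) [IsHalfExact G]
    {X : ShortComplex C} (hX : X.ShortExact) :
    (ShortComplex.mk (ε.app hX) (G.map X.f) (ε.app_comp_map_f hX)).Exact := by
  rw [ShortComplex.exact_iff_exact_up_to_refinements]
  intro A x hx
  have hP := presentation_shortExact X.X₃
  have := hε.mono_app hP
  obtain ⟨A', π, hπ, y, hy, hxy⟩ :=
    IsHalfExact.exists_comp_map_τ₁_eq G hP hX (presentationLift hX (𝟙 _)) x hx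
  obtain ⟨z, rfl⟩ : ∃ z : A' ⟶ F.obj X.X₃, z ≫ ε.app (X := presentation X.X₃) hP = y :=
    ⟨_, (hε.app_exact hP).lift_f y hy⟩
  exact ⟨A', π, hπ, z, by simpa only [ε.app_eq_presentation_app hX, assoc] using hxy⟩

lemma exact_at_source (hε : ε.IsLeftSatellite) [IsHalfExact G]
    {X : ShortComplex C} (hX : X.ShortExact) :
    (ShortComplex.mk (F.map X.g) (ε.app hX) (ε.map_g_comp_app hX)).Exact := by
  rw [ShortComplex.exact_iff_exact_up_to_refinements]
  intro A (x : A ⟶ F.obj X.X₃) (hx : x ≫ ε.app hX = 0)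
  have hP := presentation_shortExact X.X₃
  have := hε.mono_app hP
  have hx' : (x ≫ ε.app (X := presentation X.X₃) hP) ≫
      G.map (biprod.lift (presentation X.X₃).f (presentationLift hX (𝟙 _)).τ₁) = 0 := by
    rw [ε.app_eq_presentation_app] at hx
    rw [biprod.lift_eq, G.map_add, G.map_comp, G.map_comp, Preadditive.comp_add, assoc, assoc,
      reassoc_of% hx, reassoc_of% ε.app_comp_map_f hP, zero_comp, zero_comp, comp_zero, add_zero]
  obtain ⟨A', π, hπ, y, hy⟩ := (hε.exact_at_target
    (presentationRotation_shortExact hX)).exact_up_to_refinements _ hx'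
  refine ⟨A', π, hπ, y, ?_⟩
  simpa only [app_presentationRotation, ← assoc, cancel_mono] using hy

lemma isExact (hε : ε.IsLeftSatellite) [IsHalfExact G] : ε.IsExact where
  exact_app := hε.exact_at_source
  app_exact := hε.exact_at_target

lemma isHalfExact (hε : ε.IsLeftSatellite) [IsHalfExact G] : IsHalfExact F :=
  have := hε.additive
  { exact {X} hX := by
      rw [ShortComplex.exact_iff_exact_up_to_refinements]
      intro A (x : A ⟶ F.obj X.X₂) (hx : x ≫ F.map X.g = 0)
      obtain ⟨A', π, hπ, (y : A' ⟶ F.obj (_ ⊞ _)), (hy : _ = y ≫ F.map (biprod.desc _ _))⟩ :=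
        (hε.exact_at_source (presentationRotation_shortExact hX)).exact_up_to_refinements x
          (by simp only [app_presentationRotation, reassoc_of% hx, zero_comp])
      have h_zero : F.map (presentationLift hX (𝟙 _)).τ₂ = 0 :=
        (hε.isZero_obj_of_projective (presentation X.X₃).X₂).eq_of_src _ _
      refine ⟨A', π, hπ, y ≫ F.map (-biprod.snd), ?_⟩
      calc π ≫ x = y ≫ F.map (-biprod.snd) ≫ F.map X.f := by
            rw [hy, biprod.desc_eq, F.map_add, F.map_comp, F.map_comp, h_zero, comp_zero,
              zero_add, F.map_neg, F.map_neg, Preadditive.comp_neg, Preadditive.neg_comp]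
        _ = (y ≫ F.map (-biprod.snd)) ≫ F.map X.f := (assoc _ _ _).symm }

end IsLeftSatellite

end ConnectingHom

end LongExactSequence

section LeftSatellite

variable [EnoughProjectives C] (F : C ⥤ D) [F.Additive]

/-- The left satellite `S^{-1}F`, computed on the chosen projective presentations. -/
noncomputable def leftSatellite : C ⥤ D where
  obj M := kernel (F.map (presentation M).f)
  map {_ N} f := kernel.map _ _ (F.map (presentationLift (presentation_shortExact N) f).τ₁)
    (F.map (presentationLift (presentation_shortExact N) f).τ₂)
    (by rw [← F.map_comp, ← F.map_comp, ShortComplex.Hom.comm₁₂])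
  map_id M := by
    have h := comp_map_τ₁_eq F (presentation_shortExact M)
      (φ := presentationLift (presentation_shortExact M) (𝟙 M)) (ψ := 𝟙 _) (by simp)
      (kernel.condition (F.map (presentation M).f))
    rw [← cancel_mono (kernel.ι _), kernel.lift_ι, h, ShortComplex.id_τ₁, F.map_id, comp_id,
      id_comp]
  map_comp {L M N} f g := by
    have h := comp_map_τ₁_eq F (presentation_shortExact N)
      (φ := presentationLift (presentation_shortExact N) (f ≫ g))
      (ψ := presentationLift (presentation_shortExact M) f ≫
        presentationLift (presentation_shortExact N) g) (by simp)
      (kernel.condition (F.map (presentation L).f))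
    simp only [← cancel_mono (kernel.ι _), kernel.lift_ι, assoc, kernel.lift_ι_assoc, h,
      ShortComplex.comp_τ₁, F.map_comp]

/-- The inclusion of `S^{-1}F(M)` into `F(K)`, where `0 → K → P → M → 0` is the chosen
presentation of `M`. -/
noncomputable def leftSatelliteι (M : C) :
    (leftSatellite F).obj M ⟶ F.obj (presentation M).X₁ :=
  kernel.ι (F.map (presentation M).f)

instance (M : C) : Mono (leftSatelliteι F M) :=
  inferInstanceAs (Mono (kernel.ι _))

lemma leftSatelliteι_comp_map (M : C) : leftSatelliteι F M ≫ F.map (presentation M).f = 0 :=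
  kernel.condition _

lemma leftSatellite_map_comp_ι {M N : C} (f : M ⟶ N) :
    (leftSatellite F).map f ≫ leftSatelliteι F N =
      leftSatelliteι F M ≫ F.map (presentationLift (presentation_shortExact N) f).τ₁ :=
  kernel.lift_ι _ _ _

/-- The connecting homomorphism from `S^{-1}F` to `F`. -/
noncomputable def leftSatelliteConnectingHom : ConnectingHom (leftSatellite F) F where
  app {X} hX := leftSatelliteι F X.X₃ ≫ F.map (presentationLift hX (𝟙 _)).τ₁
  naturality {X Y} hX hY φ := by
    have h := comp_map_τ₁_eq F hY
      (φ := presentationLift (presentation_shortExact Y.X₃) φ.τ₃ ≫ presentationLift hY (𝟙 _))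
      (ψ := presentationLift hX (𝟙 _) ≫ φ) (by simp) (leftSatelliteι_comp_map F X.X₃)
    rw [reassoc_of% leftSatellite_map_comp_ι F φ.τ₃, assoc]
    simpa only [ShortComplex.comp_τ₁, F.map_comp] using h
  app_comp_map_f {X} hX := by
    rw [assoc, ← F.map_comp, (presentationLift hX (𝟙 _)).comm₁₂, F.map_comp,
      reassoc_of% leftSatelliteι_comp_map F X.X₃, zero_comp]

lemma leftSatelliteConnectingHom_isLeftSatellite :
    (leftSatelliteConnectingHom F).IsLeftSatellite where
  mono_app {X} hX _ := by
    obtain ⟨ψ, hψ⟩ := exists_hom_τ₃_eq (presentation_shortExact X.X₃) (𝟙 X.X₃)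
    have h := comp_map_τ₁_eq F (presentation_shortExact X.X₃)
      (φ := presentationLift hX (𝟙 _) ≫ ψ) (ψ := 𝟙 _) (by simp [hψ])
      (leftSatelliteι_comp_map F X.X₃)
    have h_ι : (leftSatelliteConnectingHom F).app hX ≫ F.map ψ.τ₁ = leftSatelliteι F X.X₃ := by
      simpa [leftSatelliteConnectingHom] using h
    exact mono_of_mono_fac h_ι
  app_exact {X} hX _ := by
    obtain ⟨ψ, hψ⟩ := exists_hom_τ₃_eq (presentation_shortExact X.X₃) (𝟙 X.X₃)
    rw [ShortComplex.exact_iff_exact_up_to_refinements]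
    intro A (x : A ⟶ F.obj X.X₁) (hx : x ≫ F.map X.f = 0)
    have h := comp_map_τ₁_eq F hX (φ := ψ ≫ presentationLift hX (𝟙 _)) (ψ := 𝟙 _)
      (by simp [hψ]) hx
    obtain ⟨z, hz⟩ : ∃ z, z ≫ leftSatelliteι F X.X₃ = x ≫ F.map ψ.τ₁ := by
      refine ⟨kernel.lift _ (x ≫ F.map ψ.τ₁) ?_, kernel.lift_ι _ _ _⟩
      rw [assoc, ← F.map_comp, ψ.comm₁₂, F.map_comp, reassoc_of% hx, zero_comp]
    refine ⟨A, 𝟙 A, inferInstance, z, ?_⟩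
    simpa [leftSatelliteConnectingHom, reassoc_of% hz] using h.symm

end LeftSatellite

namespace CohomFunctor

variable (T : CohomFunctor C D) (n : ℤ)

/-- The connecting homomorphism `δ^n` of a cohomological functor. -/
@[simps]
def connectingHom : ConnectingHom (T.T n) (T.T (n + 1)) where
  app hX := T.δ hX n
  naturality hX hY φ := T.δ_natural hX hY φ n
  app_comp_map_f hX := T.zero₃ hX n

lemma connectingHom_isExact : (T.connectingHom n).IsExact where
  exact_app hX := T.exact₂ hX n
  app_exact hX := T.exact₃ hX n

instance : IsHalfExact (T.T n) where
  toAdditive := T.additive n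
  exact hX := T.exact₁ hX n

variable {T} in
lemma connectingHom_isLeftSatellite (hT : VanishesOnProjectives T) :
    (T.connectingHom n).IsLeftSatellite :=
  (T.connectingHom_isExact n).isLeftSatellite (hT n)

end CohomFunctor

namespace CohomHom

variable {T U : CohomFunctor C D}

lemma ext_app {φ ψ : CohomHom T U} (h : ∀ n, φ.app n = ψ.app n) : φ = ψ := by
  cases φ
  cases ψ
  congr
  exact funext h

lemma connectingHom_postcomp_app (φ : CohomHom T U) (n : ℤ) :
    (T.connectingHom n).postcomp (φ.app (n + 1)) = (U.connectingHom n).precomp (φ.app n) := by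
  ext X hX
  exact (φ.comm hX n).symm

end CohomHom

section IteratedLeftSatellite

variable [EnoughProjectives C]

/-- The iterated left satellite `S^{-k}F`, bundled with its half exactness, which is what makes
the next satellite well behaved. -/
noncomputable def iteratedLeftSatellite (F : C ⥤ D) [hF : IsHalfExact F] :
    ℕ → {G : C ⥤ D // IsHalfExact G}
  | 0 => ⟨F, hF⟩
  | k + 1 =>
    have := (iteratedLeftSatellite F k).2
    ⟨leftSatellite (iteratedLeftSatellite F k).1,
      (leftSatelliteConnectingHom_isLeftSatellite _).isHalfExact⟩

variable (F : C ⥤ D) [IsHalfExact F] (k : ℕ)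

instance : IsHalfExact (iteratedLeftSatellite F k).1 :=
  (iteratedLeftSatellite F k).2

/-- The connecting homomorphism from `S^{-k-1}F` to `S^{-k}F`. -/
noncomputable def iteratedLeftSatelliteConnectingHom :
    ConnectingHom (iteratedLeftSatellite F (k + 1)).1 (iteratedLeftSatellite F k).1 :=
  leftSatelliteConnectingHom (iteratedLeftSatellite F k).1

lemma iteratedLeftSatelliteConnectingHom_isLeftSatellite :
    (iteratedLeftSatelliteConnectingHom F k).IsLeftSatellite :=
  leftSatelliteConnectingHom_isLeftSatellite _

/-- The natural transformation `S^{-k}δ̲^n`. Here `δ̲^n` lifts `δ^n` through the connecting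
homomorphism of `S^{-1}T^{n+1}`, and `S^{-k-1}δ̲^n` is induced by `S^{-k}δ̲^n`. -/
noncomputable def satelliteδbar (T : CohomFunctor C D) (n : ℤ) : ∀ k : ℕ,
    (iteratedLeftSatellite (T.T n) k).1 ⟶ (iteratedLeftSatellite (T.T (n + 1)) (k + 1)).1
  | 0 => (iteratedLeftSatelliteConnectingHom_isLeftSatellite (T.T (n + 1)) 0).lift
      (T.connectingHom n)
  | k + 1 => (iteratedLeftSatelliteConnectingHom_isLeftSatellite (T.T (n + 1)) (k + 1)).lift
      ((iteratedLeftSatelliteConnectingHom (T.T n) k).postcomp (satelliteδbar T n k))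

lemma precomp_satelliteδbar_zero (T : CohomFunctor C D) (n : ℤ) :
    (iteratedLeftSatelliteConnectingHom (T.T (n + 1)) 0).precomp (satelliteδbar T n 0) =
      T.connectingHom n :=
  ConnectingHom.IsLeftSatellite.precomp_lift _ _

lemma precomp_satelliteδbar_succ (T : CohomFunctor C D) (n : ℤ) (k : ℕ) :
    (iteratedLeftSatelliteConnectingHom (T.T (n + 1)) (k + 1)).precomp
        (satelliteδbar T n (k + 1)) =
      (iteratedLeftSatelliteConnectingHom (T.T n) k).postcomp (satelliteδbar T n k) :=
  ConnectingHom.IsLeftSatellite.precomp_lift _ _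

/-- The satellite system of `T` given by the iterated left satellites of the functors `T^n`. -/
noncomputable def standardSatelliteSystem (T : CohomFunctor C D) : SatelliteSystem T where
  S k n := (iteratedLeftSatellite (T.T n) k).1
  additive _ _ := inferInstance
  S_zero _ := rfl
  ε hX k n := (iteratedLeftSatelliteConnectingHom (T.T n) k).app hX
  ε_natural hX hY φ k n := (iteratedLeftSatelliteConnectingHom (T.T n) k).naturality hX hY φ
  vanish k n P _ :=
    (iteratedLeftSatelliteConnectingHom_isLeftSatellite (T.T n) k).isZero_obj_of_projective P
  sz₁ {X} _ _ _ := by rw [← Functor.map_comp, X.zero, Functor.map_zero]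
  sz₂ hX k n := (iteratedLeftSatelliteConnectingHom (T.T n) k).map_g_comp_app hX
  sz₃ hX k n := (iteratedLeftSatelliteConnectingHom (T.T n) k).app_comp_map_f hX
  sexact₁ hX _ _ := IsHalfExact.exact hX
  sexact₂ hX k n :=
    (iteratedLeftSatelliteConnectingHom_isLeftSatellite (T.T n) k).isExact.exact_app hX
  sexact₃ hX k n :=
    (iteratedLeftSatelliteConnectingHom_isLeftSatellite (T.T n) k).isExact.app_exact hX
  Sδbar k n := satelliteδbar T n k
  δ_fac hX n := by
    change T.δ hX n = 𝟙 _ ≫ (satelliteδbar T n 0).app _ ≫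
      (iteratedLeftSatelliteConnectingHom (T.T (n + 1)) 0).app hX ≫ 𝟙 _
    rw [id_comp, comp_id]
    exact (ConnectingHom.congr_app (precomp_satelliteδbar_zero T n) hX).symm
  Sδbar_proj hX _ k n := ConnectingHom.congr_app (precomp_satelliteδbar_succ T n k) hX

end IteratedLeftSatellite

section DirectLimit

variable {E : Type*} [Category* E]

lemma isDirectLimit_of_isColimit {K : ℕ ⥤ E} {c : Cocone K} (hc : IsColimit c) :
    IsDirectLimit (fun k => K.map (homOfLE (Nat.le_add_right k 1))) c.pt (fun k => c.ι.app k) where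
  comm k := c.w _
  desc Z g hg := by
    let s : Cocone K := ⟨Z, NatTrans.ofSequence g fun k => (hg k).trans (comp_id _).symm⟩
    exact ⟨hc.desc s, hc.fac s, fun u hu => hc.uniq s u hu⟩

lemma isDirectLimit_colimit [HasColimitsOfShape ℕ E] {X : ℕ → E} (f : ∀ k, X k ⟶ X (k + 1)) :
    IsDirectLimit f (colimit (Functor.ofSequence f)) (colimit.ι (Functor.ofSequence f)) := by
  have h := isDirectLimit_of_isColimit (colimit.isColimit (Functor.ofSequence f))
  simp only [Functor.ofSequence_map_homOfLE_succ] at h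
  exact h

namespace IsDirectLimit

variable {X : ℕ → E} {f : ∀ k, X k ⟶ X (k + 1)} {L : E} {ι : ∀ k, X k ⟶ L}

lemma hom_ext (h : IsDirectLimit f L ι) {Z : E} {a b : L ⟶ Z} (hab : ∀ k, ι k ≫ a = ι k ≫ b) :
    a = b :=
  (h.desc Z (fun k => ι k ≫ b) fun k => by rw [← assoc, h.comm]).unique hab fun _ => rfl

/-- The morphism out of a direct limit induced by a compatible family of morphisms. -/
noncomputable def descHom (h : IsDirectLimit f L ι) {Z : E} (g : ∀ k, X k ⟶ Z)
    (hg : ∀ k, f k ≫ g (k + 1) = g k) : L ⟶ Z :=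
  (h.desc Z g hg).choose

lemma ι_descHom (h : IsDirectLimit f L ι) {Z : E} (g : ∀ k, X k ⟶ Z)
    (hg : ∀ k, f k ≫ g (k + 1) = g k) (k : ℕ) :
    ι k ≫ h.descHom g hg = g k :=
  (h.desc Z g hg).choose_spec.1 k

lemma succ (h : IsDirectLimit f L ι) :
    IsDirectLimit (fun k => f (k + 1)) L (fun k => ι (k + 1)) where
  comm k := h.comm (k + 1)
  desc Z g hg := by
    have hg' (k : ℕ) : f k ≫ f (k + 1) ≫ g (k + 1) = f k ≫ g k := by rw [hg]
    refine ⟨h.descHom (fun k => f k ≫ g k) hg', fun k => ?_, fun u hu => h.hom_ext fun k => ?_⟩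
    · rw [h.ι_descHom, hg]
    · rw [h.ι_descHom, ← h.comm, assoc, hu]

lemma isZero (h : IsDirectLimit f L ι) [HasZeroMorphisms E] (hX : ∀ k, IsZero (X k)) : IsZero L :=
  (IsZero.iff_id_eq_zero L).2 (h.hom_ext fun k => (hX k).eq_of_src _ _)

/-- A direct limit, as a cocone over the functor on `ℕ` given by the direct system. -/
def cocone (h : IsDirectLimit f L ι) : Cocone (Functor.ofSequence f) :=
  ⟨L, NatTrans.ofSequence ι fun k => by
    rw [Functor.ofSequence_map_homOfLE_succ]
    exact (h.comm k).trans (comp_id _).symm⟩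

/-- `IsDirectLimit` is the colimit property over `ℕ`. -/
noncomputable def isColimit (h : IsDirectLimit f L ι) : IsColimit h.cocone where
  desc s := h.descHom (fun k => s.ι.app k) fun k => by
    rw [← s.w (homOfLE (Nat.le_add_right k 1)), Functor.ofSequence_map_homOfLE_succ]
    rfl
  fac s k := h.ι_descHom _ _ k
  uniq s u hu := h.hom_ext fun k => (hu k).trans (h.ι_descHom _ _ k).symm

end IsDirectLimit

/-- The natural transformation between functors on `ℕ` given by a morphism of direct systems. -/
def ofSequenceHom {X Y : ℕ → E} {f : ∀ k, X k ⟶ X (k + 1)} {g : ∀ k, Y k ⟶ Y (k + 1)}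
    (a : ∀ k, X k ⟶ Y k) (ha : ∀ k, f k ≫ a (k + 1) = a k ≫ g k) :
    Functor.ofSequence f ⟶ Functor.ofSequence g :=
  NatTrans.ofSequence a fun k => by
    rw [Functor.ofSequence_map_homOfLE_succ, Functor.ofSequence_map_homOfLE_succ]
    exact ha k

lemma IsDirectLimit.app {J : Type*} [Category* J] [HasColimitsOfShape ℕ E] {F : ℕ → J ⥤ E}
    {f : ∀ k, F k ⟶ F (k + 1)} {L : J ⥤ E} {ι : ∀ k, F k ⟶ L} (h : IsDirectLimit f L ι) (j : J) :
    IsDirectLimit (fun k => (f k).app j) (L.obj j) (fun k => (ι k).app j) := by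
  have h_eval := isDirectLimit_of_isColimit
    (isColimitOfPreserves ((evaluation J E).obj j) h.isColimit)
  simp only [Functor.comp_map, Functor.ofSequence_map_homOfLE_succ] at h_eval
  exact h_eval

lemma exact_of_exact_evaluation {J : Type*} [Category* J] (S : ShortComplex (J ⥤ D))
    (h : ∀ j, (S.map ((evaluation J D).obj j)).Exact) : S.Exact := by
  rw [ShortComplex.exact_iff_isZero_homology, Functor.isZero_iff]
  exact fun j => ((ShortComplex.exact_iff_isZero_homology _).1 (h j)).of_iso
    (S.mapHomologyIso ((evaluation J D).obj j)).symm

variable [HasColimitsOfShape ℕ D] [HasExactColimitsOfShape ℕ D]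

lemma IsDirectLimit.exact {X₁ X₂ X₃ : ℕ → D} {f₁ : ∀ k, X₁ k ⟶ X₁ (k + 1)}
    {f₂ : ∀ k, X₂ k ⟶ X₂ (k + 1)} {f₃ : ∀ k, X₃ k ⟶ X₃ (k + 1)} {L₁ L₂ L₃ : D}
    {ι₁ : ∀ k, X₁ k ⟶ L₁} {ι₂ : ∀ k, X₂ k ⟶ L₂} {ι₃ : ∀ k, X₃ k ⟶ L₃}
    (h₁ : IsDirectLimit f₁ L₁ ι₁) (h₂ : IsDirectLimit f₂ L₂ ι₂) (h₃ : IsDirectLimit f₃ L₃ ι₃)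
    {a : ∀ k, X₁ k ⟶ X₂ k} {b : ∀ k, X₂ k ⟶ X₃ k}
    (ha : ∀ k, f₁ k ≫ a (k + 1) = a k ≫ f₂ k) (hb : ∀ k, f₂ k ≫ b (k + 1) = b k ≫ f₃ k)
    {hab : ∀ k, a k ≫ b k = 0} (h_exact : ∀ k, (ShortComplex.mk (a k) (b k) (hab k)).Exact)
    {u : L₁ ⟶ L₂} {w : L₂ ⟶ L₃} (hu : ∀ k, ι₁ k ≫ u = a k ≫ ι₂ k)
    (hw : ∀ k, ι₂ k ≫ w = b k ≫ ι₃ k) (huw : u ≫ w = 0) :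
    (ShortComplex.mk u w huw).Exact := by
  let S : ShortComplex (ℕ ⥤ D) :=
    .mk (ofSequenceHom a ha) (ofSequenceHom b hb) (by ext k; exact hab k)
  have hS : S.Exact := exact_of_exact_evaluation S h_exact
  exact colim.exact_mapShortComplex hS h₁.isColimit h₂.isColimit h₃.isColimit u w hu hw

end DirectLimit

section DirectLimitOfConnectingHoms

variable [HasColimitsOfShape ℕ D] {F G : ℕ → C ⥤ D} {f : ∀ k, F k ⟶ F (k + 1)}
  {g : ∀ k, G k ⟶ G (k + 1)} {L M : C ⥤ D} {ι : ∀ k, F k ⟶ L} {κ : ∀ k, G k ⟶ M}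

lemma IsDirectLimit.additive (hF : IsDirectLimit f L ι) [∀ k, (F k).Additive] : L.Additive where
  map_add {X _ _ _} := (hF.app X).hom_ext fun k => by
    simp only [← (ι k).naturality, Functor.map_add, Preadditive.add_comp, Preadditive.comp_add]

lemma IsDirectLimit.isHalfExact [HasExactColimitsOfShape ℕ D] (hF : IsDirectLimit f L ι)
    [∀ k, IsHalfExact (F k)] : IsHalfExact L :=
  have := hF.additive
  { exact {X} hX :=
      IsDirectLimit.exact (hF.app X.X₁) (hF.app X.X₂) (hF.app X.X₃)
        (fun k => ((f k).naturality X.f).symm) (fun k => ((f k).naturality X.g).symm)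
        (fun k => (IsHalfExact.exact (F := F k) hX))
        (fun k => ((ι k).naturality X.f).symm) (fun k => ((ι k).naturality X.g).symm) _ }

/-- The connecting homomorphism out of a direct limit induced by a compatible family of
connecting homomorphisms. -/
noncomputable def IsDirectLimit.descConnectingHom (hF : IsDirectLimit f L ι)
    (ζ : ∀ k, ConnectingHom (F k) M) (hζ : ∀ k, (ζ (k + 1)).precomp (f k) = ζ k) :
    ConnectingHom L M where
  app {X} hX := (hF.app X.X₃).descHom (fun k => (ζ k).app hX) fun k => by
    simpa only [ConnectingHom.precomp_app] using ConnectingHom.congr_app (hζ k) hX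
  naturality {X Y} hX hY φ := (hF.app X.X₃).hom_ext fun k => by
    rw [← (ι k).naturality_assoc, (hF.app Y.X₃).ι_descHom, reassoc_of% (hF.app X.X₃).ι_descHom,
      (ζ k).naturality hX hY φ]
  app_comp_map_f {X} hX := (hF.app X.X₃).hom_ext fun k => by
    rw [reassoc_of% (hF.app X.X₃).ι_descHom, (ζ k).app_comp_map_f, comp_zero]

lemma IsDirectLimit.descConnectingHom_precomp (hF : IsDirectLimit f L ι)
    (ζ : ∀ k, ConnectingHom (F k) M) (hζ : ∀ k, (ζ (k + 1)).precomp (f k) = ζ k) (k : ℕ) :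
    (hF.descConnectingHom ζ hζ).precomp (ι k) = ζ k := by
  ext X hX
  simp only [ConnectingHom.precomp_app, descConnectingHom, (hF.app X.X₃).ι_descHom]

lemma IsDirectLimit.connectingHom_ext (hF : IsDirectLimit f L ι) {ε ε' : ConnectingHom L M}
    (h : ∀ k, ε.precomp (ι k) = ε'.precomp (ι k)) : ε = ε' := by
  ext X hX
  exact (hF.app X.X₃).hom_ext fun k => ConnectingHom.congr_app (h k) hX

namespace ConnectingHom

variable (ε : ∀ k, ConnectingHom (F k) (G k))
  (hε : ∀ k, (ε (k + 1)).precomp (f k) = (ε k).postcomp (g k))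
  (hF : IsDirectLimit f L ι) (hG : IsDirectLimit g M κ)

/-- The connecting homomorphism between direct limits induced by a compatible sequence of
connecting homomorphisms. -/
noncomputable def directLimit : ConnectingHom L M :=
  hF.descConnectingHom (fun k => (ε k).postcomp (κ k)) fun k => by
    rw [postcomp_precomp, hε, postcomp_postcomp, hG.comm]

lemma directLimit_precomp (k : ℕ) :
    (directLimit ε hε hF hG).precomp (ι k) = (ε k).postcomp (κ k) :=
  hF.descConnectingHom_precomp _ _ k

lemma directLimit_isExact [HasExactColimitsOfShape ℕ D] (h : ∀ k, (ε k).IsExact) :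
    (directLimit ε hε hF hG).IsExact where
  exact_app {X} hX :=
    IsDirectLimit.exact (hF.app X.X₂) (hF.app X.X₃) (hG.app X.X₁)
      (fun k => ((f k).naturality X.g).symm) (fun k => congr_app (hε k) hX)
      (fun k => (h k).exact_app hX)
      (fun k => ((ι k).naturality X.g).symm)
      (fun k => congr_app (directLimit_precomp ε hε hF hG k) hX) _
  app_exact {X} hX :=
    IsDirectLimit.exact (hF.app X.X₃) (hG.app X.X₁) (hG.app X.X₂)
      (fun k => congr_app (hε k) hX) (fun k => ((g k).naturality X.f).symm)
      (fun k => (h k).app_exact hX)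
      (fun k => congr_app (directLimit_precomp ε hε hF hG k) hX)
      (fun k => ((κ k).naturality X.f).symm) _

end ConnectingHom

end DirectLimitOfConnectingHoms

namespace SatelliteSystem

variable {T : CohomFunctor C D} (SS : SatelliteSystem T)

section DiagonalSystem

/-- The connecting homomorphism `ε` from `S^{-k-1}T^n` to `S^{-k}T^n`. -/
@[simps]
def connectingHom (k : ℕ) (n : ℤ) : ConnectingHom (SS.S (k + 1) n) (SS.S k n) where
  app hX := SS.ε hX k n
  naturality hX hY φ := SS.ε_natural hX hY φ k n
  app_comp_map_f hX := SS.sz₃ hX k n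

lemma connectingHom_isExact (k : ℕ) (n : ℤ) : (SS.connectingHom k n).IsExact where
  exact_app hX := SS.sexact₂ hX k n
  app_exact hX := SS.sexact₃ hX k n

instance (k : ℕ) (n : ℤ) : IsHalfExact (SS.S k n) where
  toAdditive := SS.additive k n
  exact hX := SS.sexact₁ hX k n

lemma connectingHom_precomp_eqToHom (k : ℕ) {m n : ℤ} (h : m = n) :
    (SS.connectingHom k n).precomp (eqToHom (congrArg (SS.S (k + 1)) h)) =
      (SS.connectingHom k m).postcomp (eqToHom (congrArg (SS.S k) h)) := by
  subst h
  ext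
  simp

lemma eqToHom_comp_Sδbar (k : ℕ) {m n : ℤ} (h : m = n) :
    eqToHom (congrArg (SS.S k) h) ≫ SS.Sδbar k n =
      SS.Sδbar k m ≫ eqToHom (congrArg (fun i => SS.S (k + 1) (i + 1)) h) := by
  subst h
  simp

/-- The natural transformation `S^{-k}δ̲^{n+k}`, as a transition map of the direct system
`k ↦ S^{-k}T^{n+k}`. -/
def transition (n : ℤ) (k : ℕ) : SS.S k (n + k) ⟶ SS.S (k + 1) (n + (k + 1 : ℕ)) :=
  SS.Sδbar k (n + k) ≫ eqToHom (congrArg (SS.S (k + 1)) (cast_step n k))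

lemma transition_app (n : ℤ) (k : ℕ) (M : C) : (SS.transition n k).app M = SS.map n M k := by
  rw [transition, map, NatTrans.comp_app, eqToHom_app]
  rfl

/-- The connecting homomorphism `ε`, reindexed so as to go from the `(k+1)`-st term of the direct
system with colimit `T̂^n` to the `k`-th term of the one with colimit `T̂^{n+1}`. -/
def diagonalConnectingHom (n : ℤ) (k : ℕ) :
    ConnectingHom (SS.S (k + 1) (n + (k + 1 : ℕ))) (SS.S k (n + 1 + k)) :=
  (SS.connectingHom k _).postcomp (eqToHom (congrArg (SS.S k) (by push_cast; ring)))

lemma diagonalConnectingHom_isExact (n : ℤ) (k : ℕ) : (SS.diagonalConnectingHom n k).IsExact :=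
  (SS.connectingHom_isExact k _).postcomp _

lemma connectingHom_precomp_Sδbar [EnoughProjectives C] (k : ℕ) (n : ℤ) :
    (SS.connectingHom (k + 1) (n + 1)).precomp (SS.Sδbar (k + 1) n) =
      (SS.connectingHom k n).postcomp (SS.Sδbar k n) :=
  ConnectingHom.ext_presentation fun M =>
    SS.Sδbar_proj (presentation_shortExact M) (Projective.projective_over M) k n

lemma diagonalConnectingHom_precomp_transition [EnoughProjectives C] (n : ℤ) (k : ℕ) :
    (SS.diagonalConnectingHom n (k + 1)).precomp (SS.transition n (k + 1)) =
      (SS.diagonalConnectingHom n k).postcomp (SS.transition (n + 1) k) := by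
  have h : n + (k + 1 : ℕ) = n + 1 + k := by push_cast; ring
  simp only [diagonalConnectingHom, transition, ConnectingHom.postcomp_precomp,
    ← ConnectingHom.precomp_precomp, SS.connectingHom_precomp_eqToHom _ (cast_step n (k + 1)),
    connectingHom_precomp_Sδbar, ConnectingHom.postcomp_postcomp,
    reassoc_of% SS.eqToHom_comp_Sδbar k h, eqToHom_trans]

/-- The identification of `T^n` with the zeroth term `S^0T^{n+0}` of the direct system. -/
def toZeroth (n : ℤ) : T.T n ⟶ SS.S 0 (n + (0 : ℕ)) :=
  eqToHom ((SS.S_zero n).symm.trans (congrArg (SS.S 0) (by simp)))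

lemma connectingHom_eq_precomp_δbar (n : ℤ) :
    T.connectingHom n = ((SS.connectingHom 0 (n + 1)).precomp
      (eqToHom (SS.S_zero n).symm ≫ SS.Sδbar 0 n)).postcomp (eqToHom (SS.S_zero (n + 1))) := by
  ext X hX
  simpa [eqToHom_app] using SS.δ_fac hX n

lemma connectingHom_postcomp_toZeroth (n : ℤ) :
    (T.connectingHom n).postcomp (SS.toZeroth (n + 1)) =
      (SS.diagonalConnectingHom n 0).precomp (SS.toZeroth n ≫ SS.transition n 0) := by
  have h₀ : n = n + (0 : ℕ) := by simp
  have h₁ : n + 1 = n + (0 + 1 : ℕ) := by simp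
  have h_transition : SS.toZeroth n ≫ SS.transition n 0 =
      (eqToHom (SS.S_zero n).symm ≫ SS.Sδbar 0 n) ≫ eqToHom (congrArg (SS.S 1) h₁) := by
    rw [toZeroth, transition, ← eqToHom_trans (SS.S_zero n).symm (congrArg (SS.S 0) h₀), assoc,
      reassoc_of% SS.eqToHom_comp_Sδbar 0 h₀, assoc, eqToHom_trans]
  rw [h_transition, diagonalConnectingHom, ConnectingHom.postcomp_precomp,
    ← ConnectingHom.precomp_precomp _ _ (_ ≫ _), SS.connectingHom_precomp_eqToHom 0 h₁,
    SS.connectingHom_eq_precomp_δbar]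
  simp only [toZeroth, ConnectingHom.postcomp_precomp, ConnectingHom.postcomp_postcomp,
    eqToHom_trans]

end DiagonalSystem

section Completion

variable [HasColimitsOfShape ℕ D]

/-- The functor `T̂^n`, the direct limit of the functors `S^{-k}T^{n+k}`. -/
noncomputable def completionFunctor (n : ℤ) : C ⥤ D :=
  colimit (Functor.ofSequence (SS.transition n))

/-- The canonical map from `S^{-k}T^{n+k}` to `T̂^n`. -/
noncomputable def completionι (n : ℤ) (k : ℕ) : SS.S k (n + k) ⟶ SS.completionFunctor n :=
  colimit.ι (Functor.ofSequence (SS.transition n)) k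

lemma isDirectLimit_completionFunctor (n : ℤ) :
    IsDirectLimit (SS.transition n) (SS.completionFunctor n) (SS.completionι n) :=
  isDirectLimit_colimit _

lemma isDirectLimit_completionFunctor_obj (n : ℤ) (M : C) :
    IsDirectLimit (SS.map n M) ((SS.completionFunctor n).obj M)
      (fun k => (SS.completionι n k).app M) := by
  rw [← funext fun k => SS.transition_app n k M]
  exact (SS.isDirectLimit_completionFunctor n).app M

lemma isZero_completionFunctor_obj (n : ℤ) (P : C) (hP : Projective P) :
    IsZero ((SS.completionFunctor n).obj P) :=
  ((SS.isDirectLimit_completionFunctor n).succ.app P).isZero fun k => SS.vanish k _ P hP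

variable [EnoughProjectives C]

/-- The connecting homomorphism `δ̂^n`. The direct system defining its source is shifted by one,
since `ε` lowers the number of satellites by one. -/
noncomputable def completionConnectingHom (n : ℤ) :
    ConnectingHom (SS.completionFunctor n) (SS.completionFunctor (n + 1)) :=
  ConnectingHom.directLimit (SS.diagonalConnectingHom n)
    (SS.diagonalConnectingHom_precomp_transition n)
    (SS.isDirectLimit_completionFunctor n).succ (SS.isDirectLimit_completionFunctor (n + 1))

lemma completionConnectingHom_precomp (n : ℤ) (k : ℕ) :
    (SS.completionConnectingHom n).precomp (SS.completionι n (k + 1)) =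
      (SS.diagonalConnectingHom n k).postcomp (SS.completionι (n + 1) k) :=
  ConnectingHom.directLimit_precomp _ _ _ _ k

lemma connectingHom_postcomp_toZeroth_comp_completionι (n : ℤ) :
    (T.connectingHom n).postcomp (SS.toZeroth (n + 1) ≫ SS.completionι (n + 1) 0) =
      (SS.completionConnectingHom n).precomp (SS.toZeroth n ≫ SS.completionι n 0) := by
  rw [← ConnectingHom.postcomp_postcomp, connectingHom_postcomp_toZeroth,
    ← ConnectingHom.postcomp_precomp, ← completionConnectingHom_precomp,
    ConnectingHom.precomp_precomp, assoc, (SS.isDirectLimit_completionFunctor n).comm 0]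

variable [HasExactColimitsOfShape ℕ D]

instance (n : ℤ) : IsHalfExact (SS.completionFunctor n) :=
  (SS.isDirectLimit_completionFunctor n).isHalfExact

lemma completionConnectingHom_isExact (n : ℤ) : (SS.completionConnectingHom n).IsExact :=
  ConnectingHom.directLimit_isExact _ _ _ _ (SS.diagonalConnectingHom_isExact n)

/-- The cohomological functor `(T̂^•, δ̂^•)` of the satellite functor construction. -/
noncomputable def completion : CohomFunctor C D where
  T := SS.completionFunctor
  additive _ := inferInstance
  δ hX n := (SS.completionConnectingHom n).app hX
  δ_natural hX hY φ n := (SS.completionConnectingHom n).naturality hX hY φ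
  zero₁ {X} _ _ := by rw [← Functor.map_comp, X.zero, Functor.map_zero]
  zero₂ hX n := (SS.completionConnectingHom n).map_g_comp_app hX
  zero₃ hX n := (SS.completionConnectingHom n).app_comp_map_f hX
  exact₁ hX _ := IsHalfExact.exact hX
  exact₂ hX n := (SS.completionConnectingHom_isExact n).exact_app hX
  exact₃ hX n := (SS.completionConnectingHom_isExact n).app_exact hX

lemma completion_vanishesOnProjectives : VanishesOnProjectives SS.completion :=
  SS.isZero_completionFunctor_obj

/-- The canonical morphism `ν : T^• → T̂^•`. -/
noncomputable def toCompletion : CohomHom T SS.completion where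
  app n := SS.toZeroth n ≫ SS.completionι n 0
  comm hX n := (ConnectingHom.congr_app
    (SS.connectingHom_postcomp_toZeroth_comp_completionι n) hX).symm

lemma toCompletion_app_app (n : ℤ) (M : C) :
    (SS.toCompletion.app n).app M =
      eqToHom (obj_zero_eq SS n M) ≫ (SS.completionι n 0).app M := by
  change (SS.toZeroth n ≫ SS.completionι n 0).app M = _
  rw [toZeroth, NatTrans.comp_app, eqToHom_app]
  rfl

end Completion

section UniversalProperty

variable [EnoughProjectives C] {U : CohomFunctor C D} (hU : VanishesOnProjectives U)
  (φ : CohomHom T U)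

instance (n : ℤ) : IsIso (SS.toZeroth n) :=
  inferInstanceAs (IsIso (eqToHom _))

/-- The extension of `φ : T^• → U^•` to `S^{-k}T^{n+k} → U^n`. As `U` vanishes on projectives,
`δ^n : U^n → U^{n+1}` exhibits `U^n` as the left satellite of `U^{n+1}`, so that the extension to
`S^{-k-1}` is induced by the one to `S^{-k}`. -/
noncomputable def extension : ∀ (k : ℕ) (n : ℤ), SS.S k (n + k) ⟶ U.T n
  | 0, n => inv (SS.toZeroth n) ≫ φ.app n
  | k + 1, n => (CohomFunctor.connectingHom_isLeftSatellite n hU).lift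
      ((SS.diagonalConnectingHom n k).postcomp (extension k (n + 1)))

lemma toZeroth_comp_extension (n : ℤ) : SS.toZeroth n ≫ SS.extension hU φ 0 n = φ.app n :=
  IsIso.hom_inv_id_assoc _ _

lemma connectingHom_precomp_extension_succ (k : ℕ) (n : ℤ) :
    (U.connectingHom n).precomp (SS.extension hU φ (k + 1) n) =
      (SS.diagonalConnectingHom n k).postcomp (SS.extension hU φ k (n + 1)) :=
  ConnectingHom.IsLeftSatellite.precomp_lift _ _

lemma transition_comp_extension_succ (k : ℕ) (n : ℤ) :
    SS.transition n k ≫ SS.extension hU φ (k + 1) n = SS.extension hU φ k n := by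
  have h_conn (n : ℤ) : (U.connectingHom n).IsLeftSatellite :=
    CohomFunctor.connectingHom_isLeftSatellite n hU
  induction k generalizing n with
  | zero =>
    rw [← cancel_epi (SS.toZeroth n), ← assoc]
    apply (h_conn n).hom_ext
    rw [← ConnectingHom.precomp_precomp, connectingHom_precomp_extension_succ,
      ConnectingHom.postcomp_precomp, ← connectingHom_postcomp_toZeroth,
      ConnectingHom.postcomp_postcomp, toZeroth_comp_extension, toZeroth_comp_extension,
      φ.connectingHom_postcomp_app]
  | succ k ih =>
    apply (h_conn n).hom_ext
    rw [← ConnectingHom.precomp_precomp, connectingHom_precomp_extension_succ,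
      ConnectingHom.postcomp_precomp, diagonalConnectingHom_precomp_transition,
      ConnectingHom.postcomp_postcomp, ih, connectingHom_precomp_extension_succ]

variable [HasColimitsOfShape ℕ D]

/-- The natural transformation `T̂^n → U^n` induced by `φ : T^• → U^•`. -/
noncomputable def completionDescApp (n : ℤ) : SS.completionFunctor n ⟶ U.T n :=
  (SS.isDirectLimit_completionFunctor n).descHom (fun k => SS.extension hU φ k n)
    fun k => SS.transition_comp_extension_succ hU φ k n

lemma completionι_comp_completionDescApp (n : ℤ) (k : ℕ) :
    SS.completionι n k ≫ SS.completionDescApp hU φ n = SS.extension hU φ k n :=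
  (SS.isDirectLimit_completionFunctor n).ι_descHom _ _ k

lemma completionConnectingHom_postcomp_completionDescApp (n : ℤ) :
    (SS.completionConnectingHom n).postcomp (SS.completionDescApp hU φ (n + 1)) =
      (U.connectingHom n).precomp (SS.completionDescApp hU φ n) :=
  (SS.isDirectLimit_completionFunctor n).succ.connectingHom_ext fun k => by
    rw [ConnectingHom.postcomp_precomp, completionConnectingHom_precomp,
      ConnectingHom.postcomp_postcomp, ConnectingHom.precomp_precomp,
      completionι_comp_completionDescApp, completionι_comp_completionDescApp,
      connectingHom_precomp_extension_succ]

lemma completionι_comp_eq_extension {χ : ∀ n, SS.completionFunctor n ⟶ U.T n}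
    (hχ : ∀ n, (SS.completionConnectingHom n).postcomp (χ (n + 1)) =
      (U.connectingHom n).precomp (χ n))
    (hφ : ∀ n, (SS.toZeroth n ≫ SS.completionι n 0) ≫ χ n = φ.app n) (k : ℕ) (n : ℤ) :
    SS.completionι n k ≫ χ n = SS.extension hU φ k n := by
  induction k generalizing n with
  | zero => rw [← cancel_epi (SS.toZeroth n), toZeroth_comp_extension, ← hφ, assoc]
  | succ k ih =>
    apply (CohomFunctor.connectingHom_isLeftSatellite n hU).hom_ext
    rw [← ConnectingHom.precomp_precomp, ← hχ, ConnectingHom.postcomp_precomp,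
      completionConnectingHom_precomp, ConnectingHom.postcomp_postcomp, ih,
      connectingHom_precomp_extension_succ]

variable [HasExactColimitsOfShape ℕ D]

/-- The morphism `T̂^• → U^•` induced by `φ : T^• → U^•`. -/
noncomputable def completionDesc : CohomHom SS.completion U where
  app := SS.completionDescApp hU φ
  comm hX n := (ConnectingHom.congr_app
    (SS.completionConnectingHom_postcomp_completionDescApp hU φ n) hX).symm

lemma toCompletion_comp_completionDesc : SS.toCompletion.comp (SS.completionDesc hU φ) = φ :=
  CohomHom.ext_app fun n => by
    change (SS.toZeroth n ≫ SS.completionι n 0) ≫ SS.completionDescApp hU φ n = φ.app n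
    rw [assoc, completionι_comp_completionDescApp, toZeroth_comp_extension]

lemma eq_completionDesc {χ : CohomHom SS.completion U} (hχ : SS.toCompletion.comp χ = φ) :
    χ = SS.completionDesc hU φ :=
  CohomHom.ext_app fun n => (SS.isDirectLimit_completionFunctor n).hom_ext fun k =>
    (SS.completionι_comp_eq_extension hU φ χ.connectingHom_postcomp_app
      (fun n => congrArg (fun ψ => ψ.app n) hχ) k n).trans
      (SS.completionι_comp_completionDescApp hU φ n k).symm

end UniversalProperty

theorem isMislinCompletion_completion [EnoughProjectives C] [HasColimitsOfShape ℕ D]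
    [HasExactColimitsOfShape ℕ D] : IsMislinCompletion T SS.completion SS.toCompletion where
  vanishes := SS.completion_vanishesOnProjectives
  factors _ hU φ :=
    ⟨SS.completionDesc hU φ, SS.toCompletion_comp_completionDesc hU φ,
      fun _ hχ => SS.eq_completionDesc hU φ hχ⟩

end SatelliteSystem

/-- Theorem 3.5. Let `C` be an abelian category with enough projectives and
`D` an abelian category in which all countable direct limits (colimits over the directed set
`ℕ₀`) exist and are exact. Then every cohomological functor `(T^•, δ^•) : C → D` admits a
Mislin completion, and a Mislin completion can be defined via the satellite functor
construction `T̂^n(M) := colim_{k ∈ ℕ₀} (S^{-k}T^{n+k}(M), S^{-k}δ̲^{n+k})`. -/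
theorem mislinCompletion_exists_and_satellite_construction
    {C : Type u} [Category.{v} C] [Abelian C] [EnoughProjectives C]
    {D : Type u'} [Category.{v'} D] [Abelian D]
    [HasColimitsOfShape ℕ D] [PreservesFiniteLimits (colim : (ℕ ⥤ D) ⥤ D)]
    (T : CohomFunctor C D) :
    (∃ (That : CohomFunctor C D) (ν : CohomHom T That), IsMislinCompletion T That ν) ∧
    (∀ SS : SatelliteSystem T,
      ∃ (That : CohomFunctor C D) (ν : CohomHom T That)
        (ι : ∀ (n : ℤ) (M : C) (k : ℕ), SS.obj n M k ⟶ (That.T n).obj M),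
        IsMislinCompletion T That ν ∧
        (∀ (n : ℤ) (M : C), IsDirectLimit (SS.map n M) ((That.T n).obj M) (ι n M)) ∧
        (∀ (n : ℤ) (M : C), (ν.app n).app M = eqToHom (obj_zero_eq SS n M) ≫ ι n M 0)) := by
  have : HasExactColimitsOfShape ℕ D := ⟨inferInstance⟩
  exact ⟨⟨_, _, (standardSatelliteSystem T).isMislinCompletion_completion⟩, fun SS =>
    ⟨SS.completion, SS.toCompletion, fun n M k => (SS.completionι n k).app M,
      SS.isMislinCompletion_completion, SS.isDirectLimit_completionFunctor_obj,
      SS.toCompletion_app_app⟩⟩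

end Mislin
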